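/- Let n ≥ 2 and for each k ≥ 2 let A_k be the set of pairs (P, S) where P is a connected compatible partition of the crown poset C_{2n}, S is a subset of the set of blocks of P having odd cardinality, and |P| − |S| = k − 2. Then for every k ≥ 3, the number of connected compatible partitions of Ĉ_{2n} with exactly k blocks equals |A_k|, and the number of connected compatible partitions of Ĉ_{2n} with exactly 2 blocks equals |A_2| + 2. -/

import Mathlib

/-- Cover relations of the crown poset `C_{2n}` on `{1,…,2n}`:
`2i−1 ≺ 2i` for `1 ≤ i ≤ n`, `2i+1 ≺ 2i` for `1 ≤ i ≤ n−1`, and `1 ≺ 2n`. -/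
def crownCover (n x y : ℕ) : Prop :=
  Odd x ∧ Even y ∧ (y = x + 1 ∨ x = y + 1 ∨ (x = 1 ∧ y = 2 * n))

/-- The order relation of the crown poset `C_{2n}` (restricted to `{1,…,2n}`). -/
def crownLe (n x y : ℕ) : Prop := x = y ∨ crownCover n x y

/-- The ground set `{1,…,2n}` of the crown poset. -/
def crownGround (n : ℕ) : Finset ℕ := Finset.Icc 1 (2 * n)

/-- `π` is a partition of the finite set `s`: blocks are nonempty subsets of `s`
and each element of `s` lies in exactly one block. -/
def IsPartitionOn (s : Finset ℕ) (π : Finset (Finset ℕ)) : Prop :=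
  (∀ B ∈ π, B.Nonempty) ∧ (∀ B ∈ π, B ⊆ s) ∧ ∀ x ∈ s, ∃! B, B ∈ π ∧ x ∈ B

/-- A block is connected if it induces a connected subgraph of `G`. -/
def BlockConnected (G : SimpleGraph ℕ) (B : Finset ℕ) : Prop :=
  (G.induce (B : Set ℕ)).Connected

/-- A connected partition of `s` with respect to the graph `G`. -/
def IsConnectedPartition (s : Finset ℕ) (G : SimpleGraph ℕ) (π : Finset (Finset ℕ)) : Prop :=
  IsPartitionOn s π ∧ ∀ B ∈ π, BlockConnected G B

/-- The comparability graph of the relation `le`. -/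
def compGraph (le : ℕ → ℕ → Prop) : SimpleGraph ℕ := SimpleGraph.fromRel le

/-- The relation `B ≤_π B'` on blocks of `π`: both are blocks and there are
`x ∈ B`, `y ∈ B'` with `x ≤ y`. -/
def blockRel (le : ℕ → ℕ → Prop) (π : Finset (Finset ℕ)) (B B' : Finset ℕ) : Prop :=
  B ∈ π ∧ B' ∈ π ∧ ∃ x ∈ B, ∃ y ∈ B', le x y

/-- `π` is compatible: the transitive closure of `≤_π` is antisymmetric. -/
def IsCompatible (le : ℕ → ℕ → Prop) (π : Finset (Finset ℕ)) : Prop :=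
  ∀ B ∈ π, ∀ B' ∈ π, Relation.TransGen (blockRel le π) B B' →
    Relation.TransGen (blockRel le π) B' B → B = B'

/-- A connected and compatible partition (CCP) of the poset with ground set `s`
and order relation `le`. -/
def IsCCP (s : Finset ℕ) (le : ℕ → ℕ → Prop) (π : Finset (Finset ℕ)) : Prop :=
  IsConnectedPartition s (compGraph le) π ∧ IsCompatible le π

/-- The order relation of `Ĉ_{2n}`, the crown poset with a minimum `0̂ = 0` and a
maximum `1̂ = 2n+1` adjoined; ground set `{0,1,…,2n+1}`. -/
def hatCrownLe (n x y : ℕ) : Prop :=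
  x = y ∨ x = 0 ∨ y = 2 * n + 1 ∨
    (x ∈ crownGround n ∧ y ∈ crownGround n ∧ crownCover n x y)

/-- The ground set `{0,…,2n+1}` of `Ĉ_{2n}`. -/
def hatCrownGround (n : ℕ) : Finset ℕ := Finset.Icc 0 (2 * n + 1)

/-- The set of CCPs of `Ĉ_{2n}` with exactly `k` blocks. -/
def hatCCPs (n k : ℕ) : Set (Finset (Finset ℕ)) :=
  {π | IsCCP (hatCrownGround n) (hatCrownLe n) π ∧ π.card = k}

/-- The set `A_k` of pairs `(P, S)` where `P` is a CCP of the crown poset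
`C_{2n}`, `S` is a set of odd-cardinality blocks of `P`, and `|P| − |S| = k − 2`. -/
def Ak (n k : ℕ) : Set (Finset (Finset ℕ) × Finset (Finset ℕ)) :=
  {PS | IsCCP (crownGround n) (crownLe n) PS.1 ∧ PS.2 ⊆ PS.1 ∧
    (∀ B ∈ PS.2, Odd B.card) ∧ PS.1.card = PS.2.card + (k - 2)}

/-!
In a CCP of a bounded poset with at least two blocks, the block of `0̂` is a lower set, the block
of `1̂` is an upper set, and the other blocks form a CCP of the rest; conversely any such data give
a CCP. So a CCP of `Ĉ_{2n}` with `k` blocks amounts to disjoint lower and upper sets `D`, `U` of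
the crown and a CCP of `C_{2n} \ (D ∪ U)` with `k - 2` blocks. Adding to the latter the connected
components of `D` and `U`, marked, gives a CCP of the crown in which every marked block is a lower
or an upper set, and `D`, `U` can be read off as the unions of the lower and of the upper marked
blocks, unless one of them is the whole crown, which is its own single component and is both lower
and upper. These two exceptions occur only for `k = 2`.

The comparability graph of the crown is a cycle whose vertices are alternately minimal and maximal,
so a proper connected block has odd cardinality exactly when it is a lower or an upper set.
-/

section Partition

variable {s t : Finset ℕ} {π ρ S : Finset (Finset ℕ)} {B C : Finset ℕ} {x : ℕ}

theorem IsPartitionOn.eq_of_mem (h : IsPartitionOn s π) (hB : B ∈ π) (hC : C ∈ π)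
    (hxB : x ∈ B) (hxC : x ∈ C) : B = C :=
  (h.2.2 x (h.2.1 B hB hxB)).unique ⟨hB, hxB⟩ ⟨hC, hxC⟩

theorem IsPartitionOn.exists_mem (h : IsPartitionOn s π) (hx : x ∈ s) : ∃ B ∈ π, x ∈ B :=
  (h.2.2 x hx).exists

theorem isPartitionOn_iff : IsPartitionOn s π ↔
    (∀ B ∈ π, B.Nonempty) ∧ (π : Set (Finset ℕ)).PairwiseDisjoint id ∧ π.sup id = s := by
  constructor
  · refine fun h ↦ ⟨h.1, fun B hB C hC hne ↦ Finset.disjoint_left.2 fun x hxB hxC ↦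
      hne (h.eq_of_mem hB hC hxB hxC), ?_⟩
    refine (Finset.sup_le h.2.1).antisymm fun x hx ↦ ?_
    obtain ⟨B, hB, hxB⟩ := h.exists_mem hx
    exact Finset.mem_sup.2 ⟨B, hB, hxB⟩
  · rintro ⟨nonempty, disjoint, rfl⟩
    refine ⟨nonempty, fun B hB ↦ Finset.le_sup (f := id) hB, fun x hx ↦ ?_⟩
    obtain ⟨B, hB, hxB⟩ := Finset.mem_sup.1 hx
    exact ⟨B, ⟨hB, hxB⟩, fun C hC ↦ disjoint.elim_finset hC.1 hB x hC.2 hxB⟩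

theorem IsPartitionOn.subfamily (h : IsPartitionOn s π) (hS : S ⊆ π) :
    IsPartitionOn (S.sup id) S :=
  isPartitionOn_iff.2 ⟨fun B hB ↦ h.1 B (hS hB),
    (isPartitionOn_iff.1 h).2.1.subset (Finset.coe_subset.2 hS), rfl⟩

theorem IsPartitionOn.disjoint_sup (h : IsPartitionOn s π) (hS : S ⊆ π) (hρ : ρ ⊆ π)
    (hSρ : Disjoint S ρ) : Disjoint (S.sup id) (ρ.sup id) := by
  simp only [Finset.disjoint_left, Finset.mem_sup, id] at hSρ ⊢
  rintro x ⟨B, hB, hxB⟩ ⟨C, hC, hxC⟩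
  exact hSρ hB (h.eq_of_mem (hS hB) (hρ hC) hxB hxC ▸ hC)

theorem IsPartitionOn.sdiff (h : IsPartitionOn s π) (hS : S ⊆ π) :
    IsPartitionOn (s \ S.sup id) (π \ S) := by
  have sup_union : (π \ S).sup id ∪ S.sup id = s := by
    rw [← Finset.sup_eq_union, ← Finset.sup_union, Finset.sdiff_union_of_subset hS,
      (isPartitionOn_iff.1 h).2.2]
  rw [← sup_union, Finset.union_sdiff_cancel_right
    (h.disjoint_sup Finset.sdiff_subset hS Finset.sdiff_disjoint)]
  exact h.subfamily Finset.sdiff_subset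

theorem IsPartitionOn.union (hπ : IsPartitionOn s π) (hρ : IsPartitionOn t ρ)
    (hst : Disjoint s t) : IsPartitionOn (s ∪ t) (π ∪ ρ) := by
  refine isPartitionOn_iff.2 ⟨fun B hB ↦ (Finset.mem_union.1 hB).elim (hπ.1 B) (hρ.1 B), ?_, ?_⟩
  · rw [Finset.coe_union, Set.pairwiseDisjoint_union]
    exact ⟨(isPartitionOn_iff.1 hπ).2.1, (isPartitionOn_iff.1 hρ).2.1,
      fun B hB C hC _ ↦ hst.mono (hπ.2.1 B hB) (hρ.2.1 C hC)⟩
  · rw [Finset.sup_union, (isPartitionOn_iff.1 hπ).2.2, (isPartitionOn_iff.1 hρ).2.2,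
      Finset.sup_eq_union]

theorem IsPartitionOn.disjoint_of_disjoint (hπ : IsPartitionOn s π) (hρ : IsPartitionOn t ρ)
    (hst : Disjoint s t) : Disjoint π ρ := by
  refine Finset.disjoint_left.2 fun B hBπ hBρ ↦ ?_
  obtain ⟨x, hx⟩ := hπ.1 B hBπ
  exact Finset.disjoint_left.1 hst (hπ.2.1 B hBπ hx) (hρ.2.1 B hBρ hx)

theorem IsPartitionOn.eq_of_subset (hπ : IsPartitionOn s π) (hρ : IsPartitionOn s ρ)
    (h : π ⊆ ρ) : π = ρ := by
  refine h.antisymm fun C hC ↦ ?_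
  obtain ⟨x, hx⟩ := hρ.1 C hC
  obtain ⟨B, hB, hxB⟩ := hπ.exists_mem (hρ.2.1 C hC hx)
  exact hρ.eq_of_mem (h hB) hC hxB hx ▸ hB

theorem isPartitionOn_singleton (hB : B.Nonempty) : IsPartitionOn B {B} :=
  isPartitionOn_iff.2 ⟨by simpa using hB, by simp, by simp⟩

theorem isPartitionOn_pair (hB : B.Nonempty) (hC : C.Nonempty) (hBC : Disjoint B C) :
    IsPartitionOn (B ∪ C) {B, C} :=
  (isPartitionOn_singleton hB).union (isPartitionOn_singleton hC) hBC

theorem isPartitionOn_parts (P : Finpartition s) : IsPartitionOn s P.parts :=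
  ⟨fun _ ↦ P.nonempty_of_mem_parts, fun _ ↦ P.le, fun _ ↦ P.existsUnique_mem⟩

end Partition

section Components

variable {G G' : SimpleGraph ℕ} {D B C : Finset ℕ} {S : Finset (Finset ℕ)} {x : ℕ}

theorem blockConnected_congr (h : ∀ x ∈ B, ∀ y ∈ B, (G.Adj x y ↔ G'.Adj x y)) :
    BlockConnected G B ↔ BlockConnected G' B := by
  have induce_eq : G.induce (B : Set ℕ) = G'.induce (B : Set ℕ) := by
    ext x y
    exact h x x.2 y y.2
  rw [BlockConnected, BlockConnected, induce_eq]

theorem blockConnected_of_forall_adj (hx : x ∈ B) (h : ∀ y ∈ B, y ≠ x → G.Adj x y) :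
    BlockConnected G B := by
  refine (SimpleGraph.connected_iff_exists_forall_reachable _).2 ⟨⟨x, hx⟩, fun y ↦ ?_⟩
  by_cases hyx : y = ⟨x, hx⟩
  · rw [hyx]
  · exact SimpleGraph.Adj.reachable (h y y.2 fun hy ↦ hyx (Subtype.ext hy))

theorem BlockConnected.subset_of_adj_closed (hB : BlockConnected G B) (hBD : B ⊆ D)
    (hC : ∀ x ∈ C, ∀ y ∈ D, G.Adj x y → y ∈ C) (hxB : x ∈ B) (hxC : x ∈ C) : B ⊆ C := by
  intro y hy
  have reachable := hB.preconnected ⟨x, hxB⟩ ⟨y, hy⟩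
  rw [SimpleGraph.reachable_iff_reflTransGen] at reachable
  suffices ∀ z : (B : Set ℕ), Relation.ReflTransGen (G.induce (B : Set ℕ)).Adj ⟨x, hxB⟩ z →
      z.1 ∈ C from this _ reachable
  intro z hz
  induction hz with
  | refl => exact hxC
  | @tail z w _ hzw hz => exact hC z hz w (hBD w.2) hzw

open Classical in
/-- The vertex sets of the connected components of the subgraph of `G` induced on `D`. -/
noncomputable def components (G : SimpleGraph ℕ) (D : Finset ℕ) : Finset (Finset ℕ) :=
  (Finpartition.ofSetSetoid (G.induce (D : Set ℕ)).spanningCoe.reachableSetoid D).parts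

theorem mem_components : B ∈ components G D ↔
    ∃ x ∈ D, ∀ y, y ∈ B ↔ y ∈ D ∧ (G.induce (D : Set ℕ)).spanningCoe.Reachable x y := by
  simp only [components, Finpartition.ofSetSetoid_parts, Finset.mem_image]
  refine exists_congr fun x ↦ and_congr_right fun _ ↦ ?_
  rw [eq_comm, Finset.ext_iff]
  simp only [Finset.mem_filter]
  rfl

theorem mem_of_mem_components (hB : B ∈ components G D) {y : ℕ} (hx : x ∈ B) (hy : y ∈ D)
    (hxy : G.Adj x y) : y ∈ B := by
  obtain ⟨z, _, hz⟩ := mem_components.1 hB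
  obtain ⟨hxD, hzx⟩ := (hz x).1 hx
  have adj : (G.induce (D : Set ℕ)).spanningCoe.Adj x y := by simpa [hxD, hy] using hxy
  exact (hz y).2 ⟨hy, hzx.trans adj.reachable⟩

theorem blockConnected_of_mem_components (hB : B ∈ components G D) : BlockConnected G B := by
  obtain ⟨x, hxD, hx⟩ := mem_components.1 hB
  have hxB : x ∈ B := (hx x).2 ⟨hxD, .rfl⟩
  refine (SimpleGraph.connected_iff_exists_forall_reachable _).2 ⟨⟨x, hxB⟩, fun ⟨y, hy⟩ ↦ ?_⟩
  suffices ∃ hy : y ∈ B, (G.induce (B : Set ℕ)).Reachable ⟨x, hxB⟩ ⟨y, hy⟩ from this.2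
  have reachable := ((hx y).1 hy).2
  clear hy
  rw [SimpleGraph.reachable_iff_reflTransGen] at reachable
  induction reachable with
  | refl => exact ⟨hxB, .rfl⟩
  | @tail z w _ hzw ih =>
    obtain ⟨hz, hxz⟩ := ih
    obtain ⟨_, hw, hadj⟩ : z ∈ D ∧ w ∈ D ∧ G.Adj z w := by
      simpa [and_left_comm] using hzw
    exact ⟨mem_of_mem_components hB hz hw hadj, hxz.trans (SimpleGraph.Adj.reachable hadj)⟩

theorem isConnectedPartition_components (G : SimpleGraph ℕ) (D : Finset ℕ) :
    IsConnectedPartition D G (components G D) :=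
  ⟨isPartitionOn_parts _, fun _ ↦ blockConnected_of_mem_components⟩

theorem IsConnectedPartition.eq_components (hS : IsConnectedPartition D G S)
    (hclosed : ∀ B ∈ S, ∀ x ∈ B, ∀ y ∈ D, G.Adj x y → y ∈ B) : S = components G D := by
  have hcomp := isConnectedPartition_components G D
  refine hS.1.eq_of_subset hcomp.1 fun B hB ↦ ?_
  obtain ⟨x, hx⟩ := hS.1.1 B hB
  obtain ⟨C, hC, hxC⟩ := hcomp.1.exists_mem (hS.1.2.1 B hB hx)
  have subset : B ⊆ C := (hS.2 B hB).subset_of_adj_closed (hS.1.2.1 B hB)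
    (fun _ hx _ ↦ mem_of_mem_components hC hx) hx hxC
  have superset : C ⊆ B := (hcomp.2 C hC).subset_of_adj_closed (hcomp.1.2.1 C hC)
    (hclosed B hB) hxC hx
  exact subset.antisymm superset ▸ hC

end Components

/-- `B` is a lower set relative to `s`: it contains every element of `s` below one of its own. -/
def IsLowerIn (s : Finset ℕ) (le : ℕ → ℕ → Prop) (B : Finset ℕ) : Prop :=
  ∀ y ∈ B, ∀ x ∈ s, le x y → x ∈ B

/-- `B` is an upper set relative to `s`: it contains every element of `s` above one of its own. By
definition this is `IsLowerIn s (flip le) B`, which lets upper sets be handled by duality. -/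
def IsUpperIn (s : Finset ℕ) (le : ℕ → ℕ → Prop) (B : Finset ℕ) : Prop :=
  ∀ x ∈ B, ∀ y ∈ s, le x y → y ∈ B

section LowerUpper

variable {s D B : Finset ℕ} {le : ℕ → ℕ → Prop} {S : Finset (Finset ℕ)} {x y : ℕ}

theorem compGraph_adj_iff : (compGraph le).Adj x y ↔ x ≠ y ∧ (le x y ∨ le y x) :=
  SimpleGraph.fromRel_adj le x y

theorem compGraph_flip : compGraph (flip le) = compGraph le := by
  ext x y
  rw [compGraph_adj_iff, compGraph_adj_iff, or_comm]
  rfl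

theorem isLowerIn_sup (h : ∀ B ∈ S, IsLowerIn s le B) : IsLowerIn s le (S.sup id) := by
  intro y hy x hx hxy
  obtain ⟨B, hB, hyB⟩ := Finset.mem_sup.1 hy
  exact Finset.mem_sup.2 ⟨B, hB, h B hB y hyB x hx hxy⟩

theorem IsLowerIn.adj_closed (hl : IsLowerIn s le B) (hu : IsUpperIn s le B) (hx : x ∈ B)
    (hy : y ∈ s) (hxy : (compGraph le).Adj x y) : y ∈ B :=
  (compGraph_adj_iff.1 hxy).2.elim (hu x hx y hy) (hl x hx y hy)

theorem BlockConnected.eq_of_isLowerIn_of_isUpperIn (hs : BlockConnected (compGraph le) s)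
    (hB : B.Nonempty) (hBs : B ⊆ s) (hl : IsLowerIn s le B) (hu : IsUpperIn s le B) : B = s := by
  obtain ⟨x, hx⟩ := hB
  exact hBs.antisymm (hs.subset_of_adj_closed subset_rfl
    (fun _ hx _ hy ↦ hl.adj_closed hu hx hy) (hBs hx) hx)

theorem IsLowerIn.of_mem_components (hD : IsLowerIn s le D)
    (hB : B ∈ components (compGraph le) D) : IsLowerIn s le B := by
  intro y hy x hx hxy
  have hyD := (isConnectedPartition_components _ _).1.2.1 B hB hy
  obtain rfl | hne := eq_or_ne x y
  · exact hy
  · exact mem_of_mem_components hB hy (hD y hyD x hx hxy)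
      (compGraph_adj_iff.2 ⟨hne.symm, .inr hxy⟩)

theorem IsUpperIn.of_mem_components (hD : IsUpperIn s le D)
    (hB : B ∈ components (compGraph le) D) : IsUpperIn s le B :=
  IsLowerIn.of_mem_components (le := flip le) hD (by rwa [compGraph_flip])

theorem IsConnectedPartition.eq_components_of_isLowerIn
    (hS : IsConnectedPartition D (compGraph le) S) (hDs : D ⊆ s)
    (hlow : ∀ B ∈ S, IsLowerIn s le B) : S = components (compGraph le) D := by
  refine hS.eq_components fun B hB x hx y hy hxy ↦ ?_
  rcases (compGraph_adj_iff.1 hxy).2 with hle | hle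
  · obtain ⟨C, hC, hyC⟩ := hS.1.exists_mem hy
    have hxC : x ∈ C := hlow C hC y hyC x (hDs (hS.1.2.1 B hB hx)) hle
    exact hS.1.eq_of_mem hC hB hxC hx ▸ hyC
  · exact hlow B hB x hx y (hDs hy) hle

theorem IsConnectedPartition.eq_components_of_isUpperIn
    (hS : IsConnectedPartition D (compGraph le) S) (hDs : D ⊆ s)
    (hup : ∀ B ∈ S, IsUpperIn s le B) : S = components (compGraph le) D := by
  rw [← compGraph_flip] at hS ⊢
  exact hS.eq_components_of_isLowerIn hDs hup

end LowerUpper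

section TransGen

variable {α : Type*} {r : α → α → Prop} {p : α → Prop} {a b : α}

theorem eq_of_transGen_of_source (hb : ∀ c, r c b → c = b) (h : Relation.TransGen r a b) :
    a = b := by
  induction h using Relation.TransGen.head_induction_on with
  | single hab => exact hb _ hab
  | head hac _ hcb => exact hb _ (hcb ▸ hac)

theorem eq_of_transGen_of_sink (ha : ∀ c, r a c → c = a) (h : Relation.TransGen r a b) : b = a :=
  eq_of_transGen_of_source (r := Function.swap r) ha (Relation.transGen_swap.2 h)

theorem transGen_restrict (h : ∀ b, p b ∨ (∀ a, r a b → a = b) ∨ ∀ c, r b c → c = b)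
    (ha : p a) (hb : p b) (hab : Relation.TransGen r a b) :
    Relation.TransGen (fun x y ↦ p x ∧ p y ∧ r x y) a b := by
  induction hab using Relation.TransGen.head_induction_on with
  | single hab => exact .single ⟨ha, hb, hab⟩
  | @head a c hac hcb ih =>
    have hc : p c := by
      rcases h c with hc | source | sink
      · exact hc
      · exact source a hac ▸ ha
      · exact eq_of_transGen_of_sink sink hcb ▸ hb
    exact .head ⟨ha, hc, hac⟩ (ih hc)

end TransGen

section CCP

variable {s E B : Finset ℕ} {le le' : ℕ → ℕ → Prop} {π K R S : Finset (Finset ℕ)} {b : ℕ}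

theorem IsCompatible.mono (h : IsCompatible le π) (hle : ∀ B ∈ K, ∀ C ∈ K, ∀ x ∈ B, ∀ y ∈ C,
    le' x y → le x y) (hK : K ⊆ π) : IsCompatible le' K := by
  have blockRel_mono : blockRel le' K ≤ blockRel le π :=
    fun B C ⟨hB, hC, x, hx, y, hy, hxy⟩ ↦ ⟨hK hB, hK hC, x, hx, y, hy, hle B hB C hC x hx y hy hxy⟩
  exact fun B hB C hC hBC hCB ↦
    h B (hK hB) C (hK hC) (Relation.TransGen.mono blockRel_mono _ _ hBC)
      (Relation.TransGen.mono blockRel_mono _ _ hCB)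

theorem IsCompatible.flip (h : IsCompatible le π) : IsCompatible (flip le) π := by
  have blockRel_flip : blockRel (_root_.flip le) π = Function.swap (blockRel le π) := by
    ext B C
    exact ⟨fun ⟨hB, hC, x, hx, y, hy, hxy⟩ ↦ ⟨hC, hB, y, hy, x, hx, hxy⟩,
      fun ⟨hC, hB, y, hy, x, hx, hxy⟩ ↦ ⟨hB, hC, x, hx, y, hy, hxy⟩⟩
  intro B hB C hC hBC hCB
  rw [blockRel_flip, Relation.transGen_swap] at hBC hCB
  exact h B hB C hC hCB hBC

theorem IsCompatible.of_source_or_sink (hK : IsCompatible le K)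
    (h : ∀ B ∈ π, B ∈ K ∨ (∀ C, blockRel le π C B → C = B) ∨ ∀ C, blockRel le π B C → C = B) :
    IsCompatible le π := by
  have trichotomy : ∀ B, B ∈ K ∨ (∀ C, blockRel le π C B → C = B) ∨
      ∀ C, blockRel le π B C → C = B := fun B ↦ by
    by_cases hB : B ∈ π
    · exact h B hB
    · exact .inr (.inr fun C hBC ↦ absurd hBC.1 hB)
  have transGen_mono : ∀ {B C}, B ∈ K → C ∈ K → Relation.TransGen (blockRel le π) B C →
      Relation.TransGen (blockRel le K) B C := fun hB hC hBC ↦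
    Relation.TransGen.mono (fun _ _ ⟨hB, hC, _, _, hle⟩ ↦ ⟨hB, hC, hle⟩) _ _
      (transGen_restrict trichotomy hB hC hBC)
  intro B hB C hC hBC hCB
  rcases h B hB with hBK | source | sink
  · rcases h C hC with hCK | source | sink
    · exact hK B hBK C hCK (transGen_mono hBK hCK hBC) (transGen_mono hCK hBK hCB)
    · exact eq_of_transGen_of_source source hBC
    · exact eq_of_transGen_of_sink sink hCB
  · exact (eq_of_transGen_of_source source hCB).symm
  · exact (eq_of_transGen_of_sink sink hBC).symm

theorem IsCCP.flip (h : IsCCP s le π) : IsCCP s (flip le) π :=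
  ⟨by rw [compGraph_flip]; exact h.1, h.2.flip⟩

theorem IsCCP.congr (h : IsCCP s le π) (hle : ∀ x ∈ s, ∀ y ∈ s, (le' x y ↔ le x y)) :
    IsCCP s le' π := by
  have subset := h.1.1.2.1
  refine ⟨⟨h.1.1, fun B hB ↦ (blockConnected_congr fun x hx y hy ↦ ?_).2 (h.1.2 B hB)⟩,
    h.2.mono (fun B hB C hC x hx y hy ↦ (hle x (subset B hB hx) y (subset C hC hy)).1) subset_rfl⟩
  rw [compGraph_adj_iff, compGraph_adj_iff, hle x (subset B hB hx) y (subset B hB hy),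
    hle y (subset B hB hy) x (subset B hB hx)]

theorem IsConnectedPartition.subfamily {G : SimpleGraph ℕ} (h : IsConnectedPartition s G π)
    (hS : S ⊆ π) : IsConnectedPartition (S.sup id) G S :=
  ⟨h.1.subfamily hS, fun B hB ↦ h.2 B (hS hB)⟩

theorem IsCCP.sdiff (h : IsCCP s le π) (hS : S ⊆ π) : IsCCP (s \ S.sup id) le (π \ S) :=
  ⟨⟨h.1.1.sdiff hS, fun B hB ↦ h.1.2 B (Finset.sdiff_subset hB)⟩,
    h.2.mono (fun _ _ _ _ _ _ _ _ hle ↦ hle) Finset.sdiff_subset⟩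

/-- A lower block is a source of the block relation and an upper block is a sink, so neither lies
on a cycle through another block. -/
theorem IsCCP.union (hR : IsCCP (s \ E) le R) (hS : IsConnectedPartition E (compGraph le) S)
    (hE : E ⊆ s) (hext : ∀ B ∈ S, IsLowerIn s le B ∨ IsUpperIn s le B) : IsCCP s le (R ∪ S) := by
  have partition : IsPartitionOn s (R ∪ S) := by
    simpa only [Finset.sdiff_union_of_subset hE] using hR.1.1.union hS.1 Finset.sdiff_disjoint
  refine ⟨⟨partition, fun B hB ↦ (Finset.mem_union.1 hB).elim (hR.1.2 B) (hS.2 B)⟩,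
    hR.2.of_source_or_sink fun B hB ↦ (Finset.mem_union.1 hB).imp_right fun hBS ↦ ?_⟩
  refine (hext B hBS).imp ?_ ?_
  · rintro lower C ⟨hC, _, x, hx, y, hy, hxy⟩
    exact partition.eq_of_mem hC hB hx (lower y hy x (partition.2.1 C hC hx) hxy)
  · rintro upper C ⟨_, hC, x, hx, y, hy, hxy⟩
    exact partition.eq_of_mem hC hB hy (upper x hx y (partition.2.1 C hC hy) hxy)

theorem IsCCP.isLowerIn_of_minimum (h : IsCCP s le π) (hb : ∀ x ∈ s, le b x) (hB : B ∈ π)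
    (hbB : b ∈ B) : IsLowerIn s le B := by
  intro y hy x hx hxy
  obtain ⟨C, hC, hxC⟩ := h.1.1.exists_mem hx
  have hCB : blockRel le π C B := ⟨hC, hB, x, hxC, y, hy, hxy⟩
  have hBC : blockRel le π B C := ⟨hB, hC, b, hbB, x, hxC, hb x hx⟩
  exact h.2 C hC B hB (.single hCB) (.single hBC) ▸ hxC

theorem IsCCP.isUpperIn_of_maximum (h : IsCCP s le π) (hb : ∀ x ∈ s, le x b) (hB : B ∈ π)
    (hbB : b ∈ B) : IsUpperIn s le B :=
  h.flip.isLowerIn_of_minimum hb hB hbB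

end CCP

section Trimmed

variable {s D U : Finset ℕ} {le : ℕ → ℕ → Prop} {R : Finset (Finset ℕ)}

/-- `R` is a CCP of what remains of the poset on `s` once a lower set `D` and an upper set `U`,
disjoint from each other, are cut off; all three may be empty. -/
structure IsTrimmedCCP (s : Finset ℕ) (le : ℕ → ℕ → Prop) (R : Finset (Finset ℕ))
    (D U : Finset ℕ) : Prop where
  lower_subset : D ⊆ s
  upper_subset : U ⊆ s
  disjoint : Disjoint D U
  isLowerIn : IsLowerIn s le D
  isUpperIn : IsUpperIn s le U
  isCCP : IsCCP (s \ (D ∪ U)) le R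

/-- The trimmed CCPs `(R, D, U)` in which `R` has `m` blocks. -/
def trimmedCCPs (s : Finset ℕ) (le : ℕ → ℕ → Prop) (m : ℕ) :
    Set (Finset (Finset ℕ) × Finset ℕ × Finset ℕ) :=
  {t | IsTrimmedCCP s le t.1 t.2.1 t.2.2 ∧ t.1.card = m}

theorem IsTrimmedCCP.flip (h : IsTrimmedCCP s le R D U) : IsTrimmedCCP s (flip le) R U D :=
  ⟨h.upper_subset, h.lower_subset, h.disjoint.symm, h.isUpperIn, h.isLowerIn,
    by rw [Finset.union_comm]; exact h.isCCP.flip⟩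

theorem finite_trimmedCCPs (s : Finset ℕ) (le : ℕ → ℕ → Prop) (m : ℕ) :
    (trimmedCCPs s le m).Finite := by
  refine (s.powerset.powerset ×ˢ s.powerset ×ˢ s.powerset).finite_toSet.subset fun t ht ↦ ?_
  simp only [Finset.mem_coe, Finset.mem_product, Finset.mem_powerset]
  exact ⟨fun B hB ↦ Finset.mem_powerset.2
    ((ht.1.isCCP.1.1.2.1 B hB).trans Finset.sdiff_subset), ht.1.lower_subset, ht.1.upper_subset⟩

end Trimmed

section BoundedExtension

variable {s t D U B : Finset ℕ} {le le' : ℕ → ℕ → Prop} {π R : Finset (Finset ℕ)} {bot top m : ℕ}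

/-- The poset `(t, le')` arises from `(s, le)` by adjoining a minimum `bot` and a maximum `top`. -/
structure IsBoundedExtension (s : Finset ℕ) (le : ℕ → ℕ → Prop) (t : Finset ℕ)
    (le' : ℕ → ℕ → Prop) (bot top : ℕ) : Prop where
  ground : t = insert bot (insert top s)
  bot_notMem : bot ∉ s
  top_notMem : top ∉ s
  bot_ne_top : bot ≠ top
  le_iff : ∀ x ∈ s, ∀ y ∈ s, (le' x y ↔ le x y)
  bot_le : ∀ x ∈ t, le' bot x
  le_top : ∀ x ∈ t, le' x top
  eq_bot : ∀ x, le' x bot → x = bot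
  eq_top : ∀ x, le' top x → x = top

namespace IsBoundedExtension

theorem flip (h : IsBoundedExtension s le t le' bot top) :
    IsBoundedExtension s (flip le) t (flip le') top bot :=
  ⟨by rw [h.ground, Finset.insert_comm], h.top_notMem, h.bot_notMem, h.bot_ne_top.symm,
    fun x hx y hy ↦ h.le_iff y hy x hx, h.le_top, h.bot_le, h.eq_top, h.eq_bot⟩

theorem bot_mem (h : IsBoundedExtension s le t le' bot top) : bot ∈ t := by
  simp [h.ground]

theorem subset (h : IsBoundedExtension s le t le' bot top) : s ⊆ t := by
  rw [h.ground]
  exact (Finset.subset_insert _ _).trans (Finset.subset_insert _ _)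

theorem isLowerIn_insert_bot (h : IsBoundedExtension s le t le' bot top) (hD : D ⊆ s) :
    IsLowerIn t le' (insert bot D) ↔ IsLowerIn s le D := by
  constructor
  · intro lower y hy x hx hxy
    refine Finset.mem_of_mem_insert_of_ne (lower y (Finset.mem_insert_of_mem hy) x (h.subset hx)
      ((h.le_iff x hx y (hD hy)).2 hxy)) ?_
    rintro rfl
    exact h.bot_notMem hx
  · intro lower y hy x hx hxy
    obtain rfl | hy := Finset.mem_insert.1 hy
    · exact Finset.mem_insert.2 (.inl (h.eq_bot x hxy))
    rw [h.ground, Finset.mem_insert, Finset.mem_insert] at hx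
    obtain rfl | rfl | hx := hx
    · exact Finset.mem_insert_self _ _
    · exact absurd (h.eq_top y hxy ▸ hD hy) h.top_notMem
    · exact Finset.mem_insert_of_mem (lower y hy x hx ((h.le_iff x hx y (hD hy)).1 hxy))

theorem isUpperIn_insert_top (h : IsBoundedExtension s le t le' bot top) (hU : U ⊆ s) :
    IsUpperIn t le' (insert top U) ↔ IsUpperIn s le U :=
  h.flip.isLowerIn_insert_bot hU

theorem blockConnected_insert_bot (h : IsBoundedExtension s le t le' bot top) (hD : D ⊆ s) :
    BlockConnected (compGraph le') (insert bot D) :=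
  blockConnected_of_forall_adj (Finset.mem_insert_self _ _) fun y hy hne ↦ compGraph_adj_iff.2
    ⟨hne.symm, .inl (h.bot_le y (Finset.insert_subset h.bot_mem (hD.trans h.subset) hy))⟩

theorem blockConnected_insert_top (h : IsBoundedExtension s le t le' bot top) (hU : U ⊆ s) :
    BlockConnected (compGraph le') (insert top U) := by
  rw [← compGraph_flip]
  exact h.flip.blockConnected_insert_bot hU

theorem disjoint_insert (h : IsBoundedExtension s le t le' bot top)
    (hR : IsTrimmedCCP s le R D U) : Disjoint (insert bot D) (insert top U) := by
  simp only [Finset.disjoint_insert_left, Finset.disjoint_insert_right, Finset.mem_insert, not_or]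
  exact ⟨⟨h.bot_ne_top.symm, fun hD ↦ h.top_notMem (hR.lower_subset hD)⟩,
    fun hU ↦ h.bot_notMem (hR.upper_subset hU), hR.disjoint⟩

theorem sdiff_union_insert (h : IsBoundedExtension s le t le' bot top) :
    t \ (insert bot D ∪ insert top U) = s \ (D ∪ U) := by
  ext x
  have bot_notMem := h.bot_notMem
  have top_notMem := h.top_notMem
  rw [h.ground]
  grind

/-- The blocks of a trimmed CCP `(R, D, U)` together with the block `D ∪ {bot}` of the minimum and
the block `U ∪ {top}` of the maximum. -/
def adjoinBounds (bot top : ℕ) (R : Finset (Finset ℕ) × Finset ℕ × Finset ℕ) :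
    Finset (Finset ℕ) :=
  R.1 ∪ {insert bot R.2.1, insert top R.2.2}

theorem isCCP_adjoinBounds (h : IsBoundedExtension s le t le' bot top)
    (hR : IsTrimmedCCP s le R D U) : IsCCP t le' (adjoinBounds bot top (R, D, U)) := by
  have ends : IsConnectedPartition (insert bot D ∪ insert top U) (compGraph le')
      {insert bot D, insert top U} := by
    refine ⟨isPartitionOn_pair (Finset.insert_nonempty _ _) (Finset.insert_nonempty _ _)
      (h.disjoint_insert hR), ?_⟩
    simpa using ⟨h.blockConnected_insert_bot hR.lower_subset,
      h.blockConnected_insert_top hR.upper_subset⟩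
  refine IsCCP.union ?_ ends ?_ ?_
  · rw [h.sdiff_union_insert]
    exact hR.isCCP.congr fun x hx y hy ↦
      h.le_iff x (Finset.sdiff_subset hx) y (Finset.sdiff_subset hy)
  · exact Finset.union_subset (Finset.insert_subset h.bot_mem (hR.lower_subset.trans h.subset))
      (Finset.insert_subset h.flip.bot_mem (hR.upper_subset.trans h.subset))
  · simp only [Finset.mem_insert, Finset.mem_singleton, forall_eq_or_imp, forall_eq]
    exact ⟨.inl ((h.isLowerIn_insert_bot hR.lower_subset).2 hR.isLowerIn),
      .inr ((h.isUpperIn_insert_top hR.upper_subset).2 hR.isUpperIn)⟩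

theorem disjoint_ends (h : IsBoundedExtension s le t le' bot top)
    (hR : IsTrimmedCCP s le R D U) : Disjoint R {insert bot D, insert top U} := by
  refine hR.isCCP.1.1.disjoint_of_disjoint (isPartitionOn_pair (Finset.insert_nonempty _ _)
    (Finset.insert_nonempty _ _) (h.disjoint_insert hR)) ?_
  rw [← h.sdiff_union_insert]
  exact Finset.sdiff_disjoint

theorem card_adjoinBounds (h : IsBoundedExtension s le t le' bot top)
    (hR : IsTrimmedCCP s le R D U) : (adjoinBounds bot top (R, D, U)).card = R.card + 2 := by
  rw [adjoinBounds, Finset.card_union_of_disjoint (h.disjoint_ends hR), Finset.card_pair]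
  exact (h.disjoint_insert hR).ne (Finset.insert_ne_empty _ _)

theorem injOn_adjoinBounds (h : IsBoundedExtension s le t le' bot top) :
    Set.InjOn (adjoinBounds bot top) (trimmedCCPs s le m) := by
  rintro ⟨R, D, U⟩ ⟨(hR : IsTrimmedCCP s le R D U), -⟩
    ⟨R', D', U'⟩ ⟨(hR' : IsTrimmedCCP s le R' D' U'), -⟩ heq
  have partition := (h.isCCP_adjoinBounds hR).1.1
  have bot_block : insert bot D = insert bot D' := partition.eq_of_mem (x := bot)
    (by simp [adjoinBounds]) (by rw [heq]; simp [adjoinBounds]) (by simp) (by simp)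
  have top_block : insert top U = insert top U' := partition.eq_of_mem (x := top)
    (by simp [adjoinBounds]) (by rw [heq]; simp [adjoinBounds]) (by simp) (by simp)
  have hD : D = D' := by
    rw [← Finset.erase_insert (fun hD ↦ h.bot_notMem (hR.lower_subset hD)), bot_block,
      Finset.erase_insert (fun hD ↦ h.bot_notMem (hR'.lower_subset hD))]
  have hU : U = U' := by
    rw [← Finset.erase_insert (fun hU ↦ h.top_notMem (hR.upper_subset hU)), top_block,
      Finset.erase_insert (fun hU ↦ h.top_notMem (hR'.upper_subset hU))]
  subst hD hU
  have rest : R = R' := by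
    rw [← Finset.union_sdiff_cancel_right (h.disjoint_ends hR),
      ← Finset.union_sdiff_cancel_right (h.disjoint_ends hR')]
    exact congrArg (· \ _) heq
  rw [rest]

theorem eq_singleton_of_mem_of_mem (h : IsBoundedExtension s le t le' bot top)
    (hπ : IsCCP t le' π) (hB : B ∈ π) (hbot : bot ∈ B) (htop : top ∈ B) : π = {B} := by
  have upper := hπ.isUpperIn_of_maximum h.le_top hB htop
  have hBt : t = B := Finset.Subset.antisymm
    (fun x hx ↦ upper bot hbot x hx (h.bot_le x hx)) (hπ.1.1.2.1 B hB)
  subst hBt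
  exact ((isPartitionOn_singleton ⟨bot, hbot⟩).eq_of_subset hπ.1.1 (by simpa using hB)).symm

theorem exists_eq_adjoinBounds (h : IsBoundedExtension s le t le' bot top)
    (hπ : IsCCP t le' π) (hcard : π.card ≠ 1) :
    ∃ R D U, IsTrimmedCCP s le R D U ∧ adjoinBounds bot top (R, D, U) = π := by
  obtain ⟨B, hB, hbot⟩ := hπ.1.1.exists_mem h.bot_mem
  obtain ⟨C, hC, htop⟩ := hπ.1.1.exists_mem h.flip.bot_mem
  have bot_notMem : bot ∉ C := fun hbotC ↦
    hcard (by rw [h.eq_singleton_of_mem_of_mem hπ hC hbotC htop, Finset.card_singleton])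
  have disjoint : Disjoint B C := (isPartitionOn_iff.1 hπ.1.1).2.1 hB hC (by grind)
  have insert_bot : insert bot (B.erase bot) = B := Finset.insert_erase hbot
  have insert_top : insert top (C.erase top) = C := Finset.insert_erase htop
  have ground := h.ground
  have lower_subset : B.erase bot ⊆ s := by
    have := hπ.1.1.2.1 B hB
    grind [Finset.disjoint_left]
  have upper_subset : C.erase top ⊆ s := by
    have := hπ.1.1.2.1 C hC
    grind
  have ends_subset : {B, C} ⊆ π := by simp [Finset.insert_subset_iff, hB, hC]
  refine ⟨π \ {B, C}, B.erase bot, C.erase top, ⟨lower_subset, upper_subset,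
    disjoint.mono (Finset.erase_subset _ _) (Finset.erase_subset _ _), ?_, ?_, ?_⟩, ?_⟩
  · rw [← h.isLowerIn_insert_bot lower_subset, insert_bot]
    exact hπ.isLowerIn_of_minimum h.bot_le hB hbot
  · rw [← h.isUpperIn_insert_top upper_subset, insert_top]
    exact hπ.isUpperIn_of_maximum h.le_top hC htop
  · have rest := hπ.sdiff ends_subset
    rw [Finset.sup_insert, Finset.sup_singleton, id, id, Finset.sup_eq_union, ← insert_bot,
      ← insert_top, h.sdiff_union_insert, insert_bot, insert_top] at rest
    exact rest.congr fun x hx y hy ↦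
      (h.le_iff x (Finset.sdiff_subset hx) y (Finset.sdiff_subset hy)).symm
  · rw [adjoinBounds, insert_bot, insert_top, Finset.sdiff_union_of_subset ends_subset]

theorem bijOn_adjoinBounds (h : IsBoundedExtension s le t le' bot top) (m : ℕ) :
    Set.BijOn (adjoinBounds bot top) (trimmedCCPs s le m)
      {π | IsCCP t le' π ∧ π.card = m + 2} := by
  refine ⟨?_, h.injOn_adjoinBounds, ?_⟩
  · rintro ⟨R, D, U⟩ ⟨hR, rfl⟩
    exact ⟨h.isCCP_adjoinBounds hR, h.card_adjoinBounds hR⟩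
  · rintro π ⟨hπ, hcard⟩
    obtain ⟨R, D, U, hR, rfl⟩ := h.exists_eq_adjoinBounds hπ (by omega)
    rw [h.card_adjoinBounds hR] at hcard
    exact ⟨(R, D, U), ⟨hR, Nat.add_right_cancel hcard⟩, rfl⟩

end IsBoundedExtension

end BoundedExtension

section Marked

variable {s D U B : Finset ℕ} {le : ℕ → ℕ → Prop} {P R S T : Finset (Finset ℕ)} {m : ℕ}

/-- The pairs `(P, S)` of a CCP `P` and a set `S` of proper blocks of `P`, each of them a lower or
an upper set, such that `m` blocks of `P` lie outside `S`. -/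
def markedCCPs (s : Finset ℕ) (le : ℕ → ℕ → Prop) (m : ℕ) :
    Set (Finset (Finset ℕ) × Finset (Finset ℕ)) :=
  {PS | IsCCP s le PS.1 ∧ PS.2 ⊆ PS.1 ∧
    (∀ B ∈ PS.2, B ≠ s ∧ (IsLowerIn s le B ∨ IsUpperIn s le B)) ∧ PS.1.card = PS.2.card + m}

/-- The trimmed CCPs `(R, D, U)` with `m` blocks in which neither `D` nor `U` is everything. -/
def properTrimmedCCPs (s : Finset ℕ) (le : ℕ → ℕ → Prop) (m : ℕ) :
    Set (Finset (Finset ℕ) × Finset ℕ × Finset ℕ) :=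
  {t ∈ trimmedCCPs s le m | t.2.1 ≠ s ∧ t.2.2 ≠ s}

open Classical in
/-- Cuts the marked blocks off a CCP, merging the lower ones and the upper ones. -/
noncomputable def detachMarked (s : Finset ℕ) (le : ℕ → ℕ → Prop)
    (PS : Finset (Finset ℕ) × Finset (Finset ℕ)) : Finset (Finset ℕ) × Finset ℕ × Finset ℕ :=
  (PS.1 \ PS.2, {B ∈ PS.2 | IsLowerIn s le B}.sup id, {B ∈ PS.2 | IsUpperIn s le B}.sup id)

/-- Turns the connected components of the two sets cut off into marked blocks. -/
noncomputable def attachMarked (le : ℕ → ℕ → Prop)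
    (t : Finset (Finset ℕ) × Finset ℕ × Finset ℕ) : Finset (Finset ℕ) × Finset (Finset ℕ) :=
  (t.1 ∪ (components (compGraph le) t.2.1 ∪ components (compGraph le) t.2.2),
    components (compGraph le) t.2.1 ∪ components (compGraph le) t.2.2)

theorem IsCCP.sup_ne_of_isLowerIn (h : IsCCP s le P) (hs : BlockConnected (compGraph le) s)
    (hT : T ⊆ P) (hne : ∀ B ∈ T, B ≠ s) (hlow : ∀ B ∈ T, IsLowerIn s le B) : T.sup id ≠ s := by
  intro hsup
  have partition : IsConnectedPartition s (compGraph le) T := hsup ▸ h.1.subfamily hT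
  have singleton : IsConnectedPartition s (compGraph le) {s} :=
    ⟨isPartitionOn_singleton (Finset.nonempty_coe_sort.1 hs.nonempty), by simpa using hs⟩
  have hTs : T = {s} := (partition.eq_components_of_isLowerIn subset_rfl hlow).trans
    (singleton.eq_components fun _ hB _ _ _ hy _ ↦ Finset.mem_singleton.1 hB ▸ hy).symm
  exact hne s (hTs ▸ Finset.mem_singleton_self s) rfl

theorem IsCCP.sup_ne_of_isUpperIn (h : IsCCP s le P) (hs : BlockConnected (compGraph le) s)
    (hT : T ⊆ P) (hne : ∀ B ∈ T, B ≠ s) (hup : ∀ B ∈ T, IsUpperIn s le B) : T.sup id ≠ s :=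
  h.flip.sup_ne_of_isLowerIn (by rwa [compGraph_flip]) hT hne hup

open Classical in
theorem filter_union_filter (hext : ∀ B ∈ S, IsLowerIn s le B ∨ IsUpperIn s le B) :
    {B ∈ S | IsLowerIn s le B} ∪ {B ∈ S | IsUpperIn s le B} = S := by
  rw [← Finset.filter_or, Finset.filter_true_of_mem hext]

theorem mapsTo_detachMarked (hs : BlockConnected (compGraph le) s) :
    Set.MapsTo (detachMarked s le) (markedCCPs s le m) (properTrimmedCCPs s le m) := by
  classical
  rintro ⟨P, S⟩ ⟨hP, (hSP : S ⊆ P), hS, (hcard : P.card = S.card + m)⟩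
  set L := {B ∈ S | IsLowerIn s le B}
  set V := {B ∈ S | IsUpperIn s le B}
  have hLP : L ⊆ P := (Finset.filter_subset _ _).trans hSP
  have hVP : V ⊆ P := (Finset.filter_subset _ _).trans hSP
  have lower : ∀ B ∈ L, IsLowerIn s le B := fun B hB ↦ (Finset.mem_filter.1 hB).2
  have upper : ∀ B ∈ V, IsUpperIn s le B := fun B hB ↦ (Finset.mem_filter.1 hB).2
  have disjoint : Disjoint L V := Finset.disjoint_filter.2 fun B hB hl hu ↦ (hS B hB).1
    (hs.eq_of_isLowerIn_of_isUpperIn (hP.1.1.1 B (hSP hB)) (hP.1.1.2.1 B (hSP hB)) hl hu)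
  have sup_eq : L.sup id ∪ V.sup id = S.sup id := by
    rw [← Finset.sup_eq_union, ← Finset.sup_union,
      filter_union_filter fun B hB ↦ (hS B hB).2]
  have proper : ∀ B ∈ S, B ≠ s := fun B hB ↦ (hS B hB).1
  refine ⟨⟨⟨?_, ?_, hP.1.1.disjoint_sup hLP hVP disjoint, isLowerIn_sup lower,
    isLowerIn_sup (le := flip le) upper, ?_⟩, ?_⟩, ?_, ?_⟩
  · exact Finset.sup_le fun B hB ↦ hP.1.1.2.1 B (hLP hB)
  · exact Finset.sup_le fun B hB ↦ hP.1.1.2.1 B (hVP hB)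
  · exact sup_eq ▸ hP.sdiff hSP
  · exact (Finset.card_sdiff_of_subset hSP).trans (by omega)
  · exact hP.sup_ne_of_isLowerIn hs hLP (fun B hB ↦ proper B (Finset.mem_of_mem_filter B hB)) lower
  · exact hP.sup_ne_of_isUpperIn hs hVP (fun B hB ↦ proper B (Finset.mem_of_mem_filter B hB)) upper

theorem leftInvOn_attachMarked :
    Set.LeftInvOn (attachMarked le) (detachMarked s le) (markedCCPs s le m) := by
  classical
  rintro ⟨P, S⟩ ⟨hP, (hSP : S ⊆ P), hS, -⟩
  have hLP : {B ∈ S | IsLowerIn s le B} ⊆ P := (Finset.filter_subset _ _).trans hSP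
  have hVP : {B ∈ S | IsUpperIn s le B} ⊆ P := (Finset.filter_subset _ _).trans hSP
  have lower := (hP.1.subfamily hLP).eq_components_of_isLowerIn
    (Finset.sup_le fun B hB ↦ hP.1.1.2.1 B (hLP hB)) fun B hB ↦ (Finset.mem_filter.1 hB).2
  have upper := (hP.1.subfamily hVP).eq_components_of_isUpperIn
    (Finset.sup_le fun B hB ↦ hP.1.1.2.1 B (hVP hB)) fun B hB ↦ (Finset.mem_filter.1 hB).2
  rw [detachMarked, attachMarked, ← lower, ← upper, filter_union_filter fun B hB ↦ (hS B hB).2,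
    Finset.sdiff_union_of_subset hSP]

theorem ne_of_mem_components {G : SimpleGraph ℕ} (hDs : D ⊆ s) (hD : D ≠ s)
    (hB : B ∈ components G D) : B ≠ s := by
  rintro rfl
  exact hD (hDs.antisymm ((isConnectedPartition_components G D).1.2.1 B hB))

theorem IsTrimmedCCP.isConnectedPartition_components_union (h : IsTrimmedCCP s le R D U) :
    IsConnectedPartition (D ∪ U) (compGraph le)
      (components (compGraph le) D ∪ components (compGraph le) U) :=
  have hD := isConnectedPartition_components (compGraph le) D
  have hU := isConnectedPartition_components (compGraph le) U
  ⟨hD.1.union hU.1 h.disjoint, fun B hB ↦ (Finset.mem_union.1 hB).elim (hD.2 B) (hU.2 B)⟩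

theorem IsTrimmedCCP.disjoint_components_union (h : IsTrimmedCCP s le R D U) :
    Disjoint R (components (compGraph le) D ∪ components (compGraph le) U) :=
  h.isCCP.1.1.disjoint_of_disjoint h.isConnectedPartition_components_union.1
    Finset.sdiff_disjoint

open Classical in
theorem IsTrimmedCCP.filter_isLowerIn_components (h : IsTrimmedCCP s le R D U)
    (hs : BlockConnected (compGraph le) s) (hU : U ≠ s) :
    {B ∈ components (compGraph le) D ∪ components (compGraph le) U | IsLowerIn s le B} =
      components (compGraph le) D := by
  have lower : ∀ B ∈ components (compGraph le) D, IsLowerIn s le B :=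
    fun B ↦ h.isLowerIn.of_mem_components
  have not_lower : ∀ B ∈ components (compGraph le) U, ¬ IsLowerIn s le B := by
    intro B hB hl
    have hcomp := (isConnectedPartition_components (compGraph le) U).1
    exact ne_of_mem_components h.upper_subset hU hB (hs.eq_of_isLowerIn_of_isUpperIn
      (hcomp.1 B hB) ((hcomp.2.1 B hB).trans h.upper_subset) hl (h.isUpperIn.of_mem_components hB))
  rw [Finset.filter_union, Finset.filter_true_of_mem lower, Finset.filter_false_of_mem not_lower,
    Finset.union_empty]

open Classical in
theorem IsTrimmedCCP.filter_isUpperIn_components (h : IsTrimmedCCP s le R D U)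
    (hs : BlockConnected (compGraph le) s) (hD : D ≠ s) :
    {B ∈ components (compGraph le) D ∪ components (compGraph le) U | IsUpperIn s le B} =
      components (compGraph le) U := by
  have hs' : BlockConnected (compGraph (_root_.flip le)) s := by rwa [compGraph_flip]
  have := h.flip.filter_isLowerIn_components hs' hD
  rwa [compGraph_flip, Finset.union_comm] at this

theorem mapsTo_attachMarked :
    Set.MapsTo (attachMarked le) (properTrimmedCCPs s le m) (markedCCPs s le m) := by
  rintro ⟨R, D, U⟩ ⟨⟨(h : IsTrimmedCCP s le R D U), rfl⟩, (hD : D ≠ s), (hU : U ≠ s)⟩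
  have extremal : ∀ B ∈ components (compGraph le) D ∪ components (compGraph le) U,
      B ≠ s ∧ (IsLowerIn s le B ∨ IsUpperIn s le B) := fun B hB ↦ (Finset.mem_union.1 hB).elim
    (fun hB ↦ ⟨ne_of_mem_components h.lower_subset hD hB, .inl (h.isLowerIn.of_mem_components hB)⟩)
    (fun hB ↦ ⟨ne_of_mem_components h.upper_subset hU hB, .inr (h.isUpperIn.of_mem_components hB)⟩)
  exact ⟨h.isCCP.union h.isConnectedPartition_components_union
      (Finset.union_subset h.lower_subset h.upper_subset) fun B hB ↦ (extremal B hB).2,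
    Finset.subset_union_right, extremal,
    (Finset.card_union_of_disjoint h.disjoint_components_union).trans (add_comm _ _)⟩

theorem rightInvOn_attachMarked (hs : BlockConnected (compGraph le) s) :
    Set.RightInvOn (attachMarked le) (detachMarked s le) (properTrimmedCCPs s le m) := by
  rintro ⟨R, D, U⟩ ⟨⟨(h : IsTrimmedCCP s le R D U), -⟩, (hD : D ≠ s), (hU : U ≠ s)⟩
  have sup_components : ∀ E, (components (compGraph le) E).sup id = E := fun E ↦
    (isPartitionOn_iff.1 (isConnectedPartition_components _ E).1).2.2
  rw [attachMarked, detachMarked, h.filter_isLowerIn_components hs hU,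
    h.filter_isUpperIn_components hs hD, sup_components, sup_components,
    Finset.union_sdiff_cancel_right h.disjoint_components_union]

theorem bijOn_detachMarked (hs : BlockConnected (compGraph le) s) (m : ℕ) :
    Set.BijOn (detachMarked s le) (markedCCPs s le m) (properTrimmedCCPs s le m) :=
  Set.InvOn.bijOn ⟨leftInvOn_attachMarked, rightInvOn_attachMarked hs⟩ (mapsTo_detachMarked hs)
    mapsTo_attachMarked

end Marked

section Count

variable {s t U : Finset ℕ} {le le' : ℕ → ℕ → Prop} {R : Finset (Finset ℕ)} {bot top m : ℕ}

theorem IsTrimmedCCP.eq_empty (h : IsTrimmedCCP s le R s U) : R = ∅ ∧ U = ∅ := by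
  have hU : U = ∅ := Finset.eq_empty_of_forall_notMem fun x hx ↦
    Finset.disjoint_left.1 h.disjoint (h.upper_subset hx) hx
  refine ⟨Finset.eq_empty_of_forall_notMem fun B hB ↦ ?_, hU⟩
  obtain ⟨x, hx⟩ := h.isCCP.1.1.1 B hB
  simpa [hU] using h.isCCP.1.1.2.1 B hB hx

theorem isTrimmedCCP_self (s : Finset ℕ) (le : ℕ → ℕ → Prop) : IsTrimmedCCP s le ∅ s ∅ where
  lower_subset := subset_rfl
  upper_subset := Finset.empty_subset s
  disjoint := Finset.disjoint_empty_right s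
  isLowerIn _ _ _ hx _ := hx
  isUpperIn _ hx := absurd hx (Finset.notMem_empty _)
  isCCP := by simp [IsCCP, IsConnectedPartition, IsPartitionOn, IsCompatible]

theorem properTrimmedCCPs_eq (s : Finset ℕ) (le : ℕ → ℕ → Prop) (m : ℕ) :
    properTrimmedCCPs s le m = trimmedCCPs s le m \ {(∅, s, ∅), (∅, ∅, s)} := by
  ext ⟨R, D, U⟩
  refine and_congr_right fun ⟨(h : IsTrimmedCCP s le R D U), _⟩ ↦ ?_
  simp only [Set.mem_insert_iff, Set.mem_singleton_iff, Prod.mk.injEq, ← not_or]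
  refine not_congr (or_congr ⟨?_, fun h ↦ h.2.1⟩ ⟨?_, fun h ↦ h.2.2⟩)
  · rintro rfl
    exact ⟨h.eq_empty.1, rfl, h.eq_empty.2⟩
  · rintro rfl
    exact ⟨h.flip.eq_empty.1, h.flip.eq_empty.2, rfl⟩

theorem ncard_trimmedCCPs_zero (hs : s.Nonempty) :
    (trimmedCCPs s le 0).ncard = (properTrimmedCCPs s le 0).ncard + 2 := by
  have subset : {(∅, s, ∅), (∅, ∅, s)} ⊆ trimmedCCPs s le 0 := by
    rintro _ (rfl | rfl)
    · exact ⟨isTrimmedCCP_self s le, Finset.card_empty⟩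
    · exact ⟨(isTrimmedCCP_self s (flip le)).flip, Finset.card_empty⟩
  rw [properTrimmedCCPs_eq,
    ← Set.ncard_sdiff_add_ncard_of_subset subset (finite_trimmedCCPs s le 0),
    Set.ncard_pair fun h ↦ hs.ne_empty (congrArg (·.2.1) h)]

theorem properTrimmedCCPs_eq_trimmedCCPs (hm : m ≠ 0) :
    properTrimmedCCPs s le m = trimmedCCPs s le m := by
  rw [properTrimmedCCPs_eq, sdiff_eq_left, Set.disjoint_right]
  rintro _ (rfl | rfl) ⟨-, hcard⟩ <;> exact hm (hcard.symm.trans Finset.card_empty)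

namespace IsBoundedExtension

theorem ncard_isCCP_of_ne_zero (h : IsBoundedExtension s le t le' bot top)
    (hs : BlockConnected (compGraph le) s) (hm : m ≠ 0) :
    {π | IsCCP t le' π ∧ π.card = m + 2}.ncard = (markedCCPs s le m).ncard := by
  rw [(bijOn_detachMarked hs m).ncard_eq, properTrimmedCCPs_eq_trimmedCCPs hm,
    (h.bijOn_adjoinBounds m).ncard_eq]

theorem ncard_isCCP_two (h : IsBoundedExtension s le t le' bot top)
    (hs : BlockConnected (compGraph le) s) :
    {π | IsCCP t le' π ∧ π.card = 2}.ncard = (markedCCPs s le 0).ncard + 2 := by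
  rw [(bijOn_detachMarked hs 0).ncard_eq,
    ← ncard_trimmedCCPs_zero (Finset.nonempty_coe_sort.1 hs.nonempty),
    (h.bijOn_adjoinBounds 0).ncard_eq]

end IsBoundedExtension

end Count

section RegularGraph

variable {s B : Finset ℕ} {G : SimpleGraph ℕ} {p : ℕ → Prop} {x k : ℕ}

open Classical in
/-- The number of neighbours of `x` in `G` that lie in `B`. -/
noncomputable def innerDegree (G : SimpleGraph ℕ) (B : Finset ℕ) (x : ℕ) : ℕ :=
  {y ∈ B | G.Adj x y}.card

theorem innerDegree_mono (hBs : B ⊆ s) (x : ℕ) : innerDegree G B x ≤ innerDegree G s x := by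
  classical exact Finset.card_le_card (Finset.filter_subset_filter _ hBs)

theorem innerDegree_eq_iff (hBs : B ⊆ s) :
    innerDegree G B x = innerDegree G s x ↔ ∀ y ∈ s, G.Adj x y → y ∈ B := by
  classical
  constructor
  · intro h y hy hxy
    have filter_eq := Finset.eq_of_subset_of_card_le
      (Finset.filter_subset_filter (G.Adj x) hBs) h.ge
    exact Finset.filter_subset _ _ (filter_eq ▸ Finset.mem_filter.2 ⟨hy, hxy⟩)
  · refine fun h ↦ (innerDegree_mono hBs x).antisymm (Finset.card_le_card fun y hy ↦ ?_)
    obtain ⟨hy, hxy⟩ := Finset.mem_filter.1 hy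
    exact Finset.mem_filter.2 ⟨h y hy hxy, hxy⟩

theorem sum_innerDegree_le {X : Finset ℕ} (hreg : ∀ x ∈ s, innerDegree G s x = k) (hXB : X ⊆ B)
    (hBs : B ⊆ s) : ∑ x ∈ X, innerDegree G B x ≤ k * X.card := by
  rw [mul_comm, ← smul_eq_mul]
  exact Finset.sum_le_card_nsmul _ _ _ fun x hx ↦
    (innerDegree_mono hBs x).trans (hreg x (hBs (hXB hx))).le

theorem sum_innerDegree_eq_iff {X : Finset ℕ} (hreg : ∀ x ∈ s, innerDegree G s x = k)
    (hXB : X ⊆ B) (hBs : B ⊆ s) :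
    ∑ x ∈ X, innerDegree G B x = k * X.card ↔ ∀ x ∈ X, ∀ y ∈ s, G.Adj x y → y ∈ B := by
  have sum_eq : ∑ x ∈ X, innerDegree G s x = k * X.card := by
    rw [Finset.sum_congr rfl fun x hx ↦ hreg x (hBs (hXB hx)), Finset.sum_const, smul_eq_mul,
      mul_comm]
  rw [← sum_eq, Finset.sum_eq_sum_iff_of_le fun x _ ↦ innerDegree_mono hBs x]
  exact forall₂_congr fun x _ ↦ innerDegree_eq_iff hBs

/-- The sum is twice the number of edges spanned by `B`. -/
theorem BlockConnected.two_mul_card_le (hB : BlockConnected G B) :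
    2 * B.card ≤ ∑ x ∈ B, innerDegree G B x + 2 := by
  classical
  have degree_eq : ∀ x : (B : Set ℕ), (G.induce (B : Set ℕ)).degree x = innerDegree G B x := by
    intro x
    rw [← SimpleGraph.card_neighborFinset_eq_degree,
      ← Finset.card_map (Function.Embedding.subtype _), innerDegree]
    congr 1
    ext y
    simp [and_comm]
  have sum_eq : ∑ x ∈ B, innerDegree G B x = 2 * (G.induce (B : Set ℕ)).edgeFinset.card := by
    rw [← SimpleGraph.sum_degrees_eq_twice_card_edges, Finset.sum_congr rfl fun x _ ↦ degree_eq x]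
    exact (Finset.sum_coe_sort B _).symm
  have card_le := SimpleGraph.Connected.card_vert_le_card_edgeSet_add_one hB
  rw [Nat.card_coe_set_eq, Set.ncard_coe_finset, Nat.card_eq_fintype_card,
    ← SimpleGraph.edgeFinset_card] at card_le
  omega

theorem sum_innerDegree_lt (hs : BlockConnected G s) (hreg : ∀ x ∈ s, innerDegree G s x = k)
    (hB : B.Nonempty) (hBs : B ⊂ s) : ∑ x ∈ B, innerDegree G B x < k * B.card := by
  refine (sum_innerDegree_le hreg subset_rfl hBs.1).lt_of_ne fun heq ↦ hBs.2 ?_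
  obtain ⟨x, hx⟩ := hB
  exact hs.subset_of_adj_closed subset_rfl
    ((sum_innerDegree_eq_iff hreg subset_rfl hBs.1).1 heq) (hBs.1 hx) hx

theorem sum_innerDegree_filter_eq [DecidablePred p]
    (hp : ∀ x ∈ B, ∀ y ∈ B, G.Adj x y → (p x ↔ ¬ p y)) :
    ∑ x ∈ B with p x, innerDegree G B x = ∑ x ∈ B with ¬ p x, innerDegree G B x := by
  classical
  convert Finset.sum_card_bipartiteAbove_eq_sum_card_bipartiteBelow (s := {x ∈ B | p x})
    (t := {x ∈ B | ¬ p x}) G.Adj using 2 with x hx y hy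
  · rw [innerDegree]
    congr 1
    ext y
    grind [Finset.mem_bipartiteAbove]
  · rw [innerDegree]
    congr 1
    ext x
    grind [Finset.mem_bipartiteBelow, G.adj_comm]

/-- With `a` vertices of one colour and `b` of the other, `B` spans `a + b - 1` edges: at least
that many since it is connected, fewer than `a + b` since it is not closed under adjacency. There
are at most `2 a` and at most `2 b` edges, so `a` and `b` differ by at most one, and they differ
exactly when one of the two bounds is attained. -/
theorem BlockConnected.odd_card_iff (hB : BlockConnected G B) (hBs : B ⊂ s)
    (hs : BlockConnected G s) (hreg : ∀ x ∈ s, innerDegree G s x = 2)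
    (hp : ∀ x ∈ s, ∀ y ∈ s, G.Adj x y → (p x ↔ ¬ p y)) :
    Odd B.card ↔ (∀ x ∈ B, ¬ p x → ∀ y ∈ s, G.Adj x y → y ∈ B) ∨
      (∀ x ∈ B, p x → ∀ y ∈ s, G.Adj x y → y ∈ B) := by
  classical
  have hX : {x ∈ B | p x} ⊆ B := Finset.filter_subset _ _
  have hY : {x ∈ B | ¬ p x} ⊆ B := Finset.filter_subset _ _
  have card_eq : {x ∈ B | p x}.card + {x ∈ B | ¬ p x}.card = B.card :=
    Finset.card_filter_add_card_filter_not p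
  have sum_eq : ∑ x ∈ B with p x, innerDegree G B x + ∑ x ∈ B with ¬ p x, innerDegree G B x =
      ∑ x ∈ B, innerDegree G B x := Finset.sum_filter_add_sum_filter_not B p _
  have double_count := sum_innerDegree_filter_eq (G := G) (B := B) (p := p)
    fun x hx y hy ↦ hp x (hBs.1 hx) y (hBs.1 hy)
  have edges_ge := hB.two_mul_card_le
  have edges_lt := sum_innerDegree_lt hs hreg (Finset.nonempty_coe_sort.1 hB.nonempty) hBs
  have edges_le := sum_innerDegree_le hreg hX hBs.1
  have edges_le' := sum_innerDegree_le hreg hY hBs.1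
  have closed := sum_innerDegree_eq_iff hreg hX hBs.1
  have closed' := sum_innerDegree_eq_iff hreg hY hBs.1
  simp only [Finset.mem_filter, and_imp] at closed closed'
  rw [← closed, ← closed', Nat.odd_iff]
  omega

end RegularGraph

section Crown

variable {n x y : ℕ} {B : Finset ℕ}

theorem blockConnected_Icc {G : SimpleGraph ℕ} {a b : ℕ} (hab : a ≤ b)
    (h : ∀ x, a ≤ x → x < b → G.Adj x (x + 1)) : BlockConnected G (Finset.Icc a b) := by
  have ha : a ∈ Finset.Icc a b := Finset.left_mem_Icc.2 hab
  suffices ∀ y, a ≤ y → ∀ hy : y ∈ Finset.Icc a b,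
      (G.induce (Finset.Icc a b : Set ℕ)).Reachable ⟨a, ha⟩ ⟨y, hy⟩ from
    (SimpleGraph.connected_iff_exists_forall_reachable _).2
      ⟨⟨a, ha⟩, fun y ↦ this y (Finset.mem_Icc.1 y.2).1 y.2⟩
  intro y hay
  induction y, hay using Nat.le_induction with
  | base => exact fun _ ↦ .rfl
  | succ y hay ih =>
    intro hy
    have hyb : y < b := (Finset.mem_Icc.1 hy).2
    exact (ih (Finset.mem_Icc.2 ⟨hay, hyb.le⟩)).trans (SimpleGraph.Adj.reachable (h y hay hyb))

theorem compGraph_crownLe_adj_iff :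
    (compGraph (crownLe n)).Adj x y ↔ crownCover n x y ∨ crownCover n y x := by
  have irrefl : ∀ x, ¬ crownCover n x x := fun x h ↦ Nat.not_even_iff_odd.2 h.1 h.2.1
  rw [compGraph_adj_iff, crownLe, crownLe]
  grind

theorem blockConnected_crownGround (hn : 0 < n) :
    BlockConnected (compGraph (crownLe n)) (crownGround n) := by
  refine blockConnected_Icc (by omega) fun x _ _ ↦ compGraph_crownLe_adj_iff.2 ?_
  obtain hx | hx := Nat.even_or_odd x
  · exact .inr ⟨hx.add_one, hx, .inr (.inl rfl)⟩
  · exact .inl ⟨hx, hx.add_one, .inl rfl⟩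

theorem innerDegree_crownGround (hn : 2 ≤ n) (hx : x ∈ crownGround n) :
    innerDegree (compGraph (crownLe n)) (crownGround n) x = 2 := by
  classical
  obtain ⟨hx₁, hx₂⟩ := Finset.mem_Icc.1 hx
  have neighbours : {y ∈ crownGround n | (compGraph (crownLe n)).Adj x y} =
      {if x = 1 then 2 * n else x - 1, if x = 2 * n then 1 else x + 1} := by
    ext y
    simp only [crownGround, compGraph_crownLe_adj_iff, crownCover, Nat.odd_iff, Nat.even_iff,
      Finset.mem_filter, Finset.mem_Icc, Finset.mem_insert, Finset.mem_singleton]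
    split_ifs <;> omega
  rw [innerDegree, neighbours, Finset.card_pair]
  split_ifs <;> omega

theorem odd_iff_not_odd_of_adj (hxy : (compGraph (crownLe n)).Adj x y) : Odd x ↔ ¬ Odd y := by
  rw [compGraph_crownLe_adj_iff, crownCover, crownCover] at hxy
  grind

theorem isLowerIn_crown_iff : IsLowerIn (crownGround n) (crownLe n) B ↔
    ∀ x ∈ B, ¬ Odd x → ∀ y ∈ crownGround n, (compGraph (crownLe n)).Adj x y → y ∈ B := by
  simp only [IsLowerIn, compGraph_crownLe_adj_iff, crownLe]
  grind [crownCover]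

theorem isUpperIn_crown_iff : IsUpperIn (crownGround n) (crownLe n) B ↔
    ∀ x ∈ B, Odd x → ∀ y ∈ crownGround n, (compGraph (crownLe n)).Adj x y → y ∈ B := by
  simp only [IsUpperIn, compGraph_crownLe_adj_iff, crownLe]
  grind [crownCover]

theorem odd_card_iff_of_blockConnected_crown (hn : 2 ≤ n) (hBs : B ⊆ crownGround n)
    (hB : BlockConnected (compGraph (crownLe n)) B) : Odd B.card ↔ B ≠ crownGround n ∧
      (IsLowerIn (crownGround n) (crownLe n) B ∨ IsUpperIn (crownGround n) (crownLe n) B) := by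
  obtain rfl | hne := eq_or_ne B (crownGround n)
  · simp [crownGround]
  · rw [isLowerIn_crown_iff, isUpperIn_crown_iff, hB.odd_card_iff (hBs.ssubset_of_ne hne)
      (blockConnected_crownGround (by omega)) (fun x ↦ innerDegree_crownGround hn)
      (fun x _ y _ ↦ odd_iff_not_odd_of_adj)]
    simp [hne]

theorem Ak_eq_markedCCPs (hn : 2 ≤ n) (k : ℕ) :
    Ak n k = markedCCPs (crownGround n) (crownLe n) (k - 2) := by
  ext ⟨P, S⟩
  refine and_congr_right fun hP ↦ and_congr_right fun hS ↦ and_congr_left' ?_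
  exact forall₂_congr fun B hB ↦ odd_card_iff_of_blockConnected_crown hn
    (hP.1.1.2.1 B (hS hB)) (hP.1.2 B (hS hB))

theorem isBoundedExtension_hatCrown (n : ℕ) : IsBoundedExtension (crownGround n) (crownLe n)
    (hatCrownGround n) (hatCrownLe n) 0 (2 * n + 1) where
  ground := by
    ext x
    simp only [hatCrownGround, crownGround, Finset.mem_insert, Finset.mem_Icc]
    omega
  bot_notMem := by simp [crownGround]
  top_notMem := by simp [crownGround]
  bot_ne_top := by omega
  le_iff x hx y hy := by
    obtain ⟨hx₁, -⟩ := Finset.mem_Icc.1 hx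
    obtain ⟨-, hy₂⟩ := Finset.mem_Icc.1 hy
    simp [hatCrownLe, crownLe, hx, hy, show x ≠ 0 by omega, show y ≠ 2 * n + 1 by omega]
  bot_le _ _ := .inr (.inl rfl)
  le_top _ _ := .inr (.inr (.inl rfl))
  eq_bot x hx := by simpa [hatCrownLe, crownGround] using hx
  eq_top x hx := by simpa [hatCrownLe, crownGround, eq_comm] using hx

end Crown

/-- Proposition 3.3 (ii) and (iii): for `k ≥ 3` the number of `k`-CCPs of
`Ĉ_{2n}` equals `|A_k|`, and the number of `2`-CCPs of `Ĉ_{2n}` is `|A_2| + 2`. -/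
theorem hatCCP_count (n : ℕ) (hn : 2 ≤ n) :
    (∀ k, 3 ≤ k → (hatCCPs n k).ncard = (Ak n k).ncard) ∧
      (hatCCPs n 2).ncard = (Ak n 2).ncard + 2 := by
  have crown_connected := blockConnected_crownGround (show 0 < n by omega)
  have extension := isBoundedExtension_hatCrown n
  refine ⟨fun k hk ↦ ?_, ?_⟩
  · obtain ⟨m, rfl⟩ : ∃ m, k = m + 2 := ⟨k - 2, by omega⟩
    rw [Ak_eq_markedCCPs hn]
    exact extension.ncard_isCCP_of_ne_zero crown_connected (by omega)
  · rw [Ak_eq_markedCCPs hn]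
    exact extension.ncard_isCCP_two crown_connected
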